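/- arXiv:1601.07168 — 6 statements merged into one kernel-verified Lean document; each statement's English description precedes it below -/
import Mathlib

section
/- Let (X, A, d) be a complete C*-algebra-valued metric space and let F : X × X → X be a mapping such that d(F(x,y), F(u,v)) ⪯ a* · d(x,u) · a + a* · d(y,v) · a for all x, y, u, v ∈ X, where a ∈ A is a fixed element with ‖a‖ < 1/√2. Then F has a unique coupled fixed point (x, y); moreover x = y, so F has a unique fixed point in X. -/
/-!
The norm of a C⋆-algebra is monotone on positive elements, so `‖d x y‖` is an ordinary metric on
`X`, for which `F` is Lipschitz with constant `‖a‖ ^ 2 + ‖a‖ ^ 2 < 1`. Hence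
`(x, y) ↦ (F x y, F y x)` is a contraction of `X × X` with its sup metric, and Banach's theorem
provides its unique fixed point, that is, the unique coupled fixed point of `F`. Coupled fixed
points are stable under swapping the coordinates, so the unique one lies on the diagonal.
-/

open Filter Function Topology
open scoped NNReal

section CoupledFixedPoint

variable {α : Type*} {F : α → α → α} {p : α × α}

/-- Coupled fixed points of a map of two variables. -/
def IsCoupledFixedPt (F : α → α → α) (p : α × α) : Prop :=
  F p.1 p.2 = p.1 ∧ F p.2 p.1 = p.2

/-- The self-map of `α × α` whose fixed points are the coupled fixed points of `F`. -/
def coupledMap (F : α → α → α) (p : α × α) : α × α :=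
  (F p.1 p.2, F p.2 p.1)

lemma isFixedPt_coupledMap_iff : IsFixedPt (coupledMap F) p ↔ IsCoupledFixedPt F p :=
  Prod.ext_iff

lemma isCoupledFixedPt_diag_iff {x : α} : IsCoupledFixedPt F (x, x) ↔ F x x = x :=
  and_self_iff

lemma IsCoupledFixedPt.swap (hp : IsCoupledFixedPt F p) : IsCoupledFixedPt F p.swap :=
  And.symm hp

lemma IsCoupledFixedPt.fst_eq_snd (hF : ∃! q, IsCoupledFixedPt F q)
    (hp : IsCoupledFixedPt F p) : p.1 = p.2 :=
  congrArg Prod.fst (hF.unique hp hp.swap)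

lemma existsUnique_fixedPt_of_existsUnique_isCoupledFixedPt
    (hF : ∃! p, IsCoupledFixedPt F p) : ∃! x, F x x = x := by
  obtain ⟨⟨x, y⟩, hxy⟩ := hF.exists
  obtain rfl : x = y := hxy.fst_eq_snd hF
  refine ⟨x, isCoupledFixedPt_diag_iff.1 hxy, fun z hz => ?_⟩
  exact congrArg Prod.fst (hF.unique (isCoupledFixedPt_diag_iff.2 hz) hxy)

lemma lipschitzWith_coupledMap [PseudoEMetricSpace α] {K : ℝ≥0}
    (hF : LipschitzWith K (uncurry F)) : LipschitzWith K (coupledMap F) := by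
  have swap : LipschitzWith 1 (Prod.swap : α × α → α × α) := by
    simpa only [max_self] using! LipschitzWith.prod_snd.prodMk LipschitzWith.prod_fst
  simpa only [mul_one, max_self] using! hF.prodMk (hF.comp swap)

lemma lipschitzWith_uncurry_of_dist_le [PseudoMetricSpace α] {K L : ℝ≥0}
    (hF : ∀ x y u v, dist (F x y) (F u v) ≤ K * dist x u + L * dist y v) :
    LipschitzWith (K + L) (uncurry F) :=
  LipschitzWith.of_dist_le_mul fun p q =>
    calc dist (F p.1 p.2) (F q.1 q.2)
      _ ≤ K * dist p.1 q.1 + L * dist p.2 q.2 := hF ..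
      _ ≤ K * dist p q + L * dist p q := by
        gcongr
        exacts [le_max_left .., le_max_right ..]
      _ = ↑(K + L) * dist p q := by rw [NNReal.coe_add, add_mul]

lemma existsUnique_isCoupledFixedPt_of_lipschitzWith [MetricSpace α] [CompleteSpace α]
    [Nonempty α] {K : ℝ≥0} (hK : K < 1) (hF : LipschitzWith K (uncurry F)) :
    ∃! p, IsCoupledFixedPt F p := by
  have contracting : ContractingWith K (coupledMap F) := ⟨hK, lipschitzWith_coupledMap hF⟩
  simp only [← isFixedPt_coupledMap_iff]
  exact ⟨_, contracting.fixedPoint_isFixedPt, fun _ => contracting.fixedPoint_unique⟩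

end CoupledFixedPoint

lemma norm_star_mul_mul_le {A : Type*} [NonUnitalSeminormedRing A] [StarRing A]
    [NormedStarGroup A] (a b : A) : ‖star a * b * a‖ ≤ ‖a‖ ^ 2 * ‖b‖ :=
  calc ‖star a * b * a‖
    _ ≤ ‖star a‖ * ‖b‖ * ‖a‖ := norm_mul₃_le
    _ = ‖a‖ ^ 2 * ‖b‖ := by rw [norm_star]; ring

section CStarComplete

variable {X A : Type*} [Norm A] {d : X → X → A}

/-- Completeness for a C⋆-algebra-valued metric, tested on sequences that are Cauchy in the usual
sense: `‖d (u m) (u n)‖` tends to zero as `m` and `n` tend to infinity independently. Sequences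
with merely `‖d (u (n + p)) (u n)‖ → 0` for each fixed `p`, such as the partial sums of the
harmonic series, are not required to converge. -/
def IsCStarComplete (d : X → X → A) : Prop :=
  ∀ u : ℕ → X, Tendsto (fun n : ℕ × ℕ => ‖d (u n.1) (u n.2)‖) atTop (𝓝 0) →
    ∃ x, Tendsto (fun n => ‖d (u n) x‖) atTop (𝓝 0)

lemma isCStarComplete_of_forall_shift
    (hd : ∀ u : ℕ → X, (∀ p, Tendsto (fun n => ‖d (u (n + p)) (u n)‖) atTop (𝓝 0)) →
      ∃ x, Tendsto (fun n => ‖d (u n) x‖) atTop (𝓝 0)) : IsCStarComplete d := by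
  intro u hu
  rw [← prod_atTop_atTop_eq] at hu
  exact hd u fun p => hu.comp ((tendsto_add_atTop_nat p).prodMk tendsto_id)

end CStarComplete

section CStarMetric

variable {X A : Type*} [NonUnitalCStarAlgebra A] [PartialOrder A] {d : X → X → A}

/-- C⋆-algebra-valued metrics, with values in a possibly non-unital algebra. -/
structure IsCStarMetric (d : X → X → A) : Prop where
  nonneg (x y : X) : 0 ≤ d x y
  eq_zero_iff (x y : X) : d x y = 0 ↔ x = y
  symm (x y : X) : d x y = d y x
  triangle (x y z : X) : d x y ≤ d x z + d z y

namespace IsCStarMetric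

variable [StarOrderedRing A]

/-- The real-valued metric `‖d x y‖` underlying a C⋆-algebra-valued metric `d`. -/
abbrev toMetricSpace (hd : IsCStarMetric d) : MetricSpace X where
  dist x y := ‖d x y‖
  dist_self x := norm_eq_zero.2 ((hd.eq_zero_iff x x).2 rfl)
  dist_comm x y := congrArg norm (hd.symm x y)
  dist_triangle x y z :=
    (CStarAlgebra.norm_le_norm_of_nonneg_of_le (hd.nonneg x z) (hd.triangle x z y)).trans
      (norm_add_le _ _)
  eq_of_dist_eq_zero h := (hd.eq_zero_iff _ _).1 (norm_eq_zero.1 h)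

lemma completeSpace (hd : IsCStarMetric d) (complete : IsCStarComplete d) :
    letI := hd.toMetricSpace
    CompleteSpace X := by
  let := hd.toMetricSpace
  refine Metric.complete_of_cauchySeq_tendsto fun u hu => ?_
  obtain ⟨x, hx⟩ := complete u (cauchySeq_iff_tendsto_dist_atTop_0.1 hu)
  exact ⟨x, tendsto_iff_dist_tendsto_zero.2 hx⟩

lemma lipschitzWith_uncurry (hd : IsCStarMetric d) {F : X → X → X} {a b : A}
    (hF : ∀ x y u v, d (F x y) (F u v) ≤ star a * d x u * a + star b * d y v * b) :
    letI := hd.toMetricSpace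
    LipschitzWith (‖a‖₊ ^ 2 + ‖b‖₊ ^ 2) (uncurry F) := by
  let := hd.toMetricSpace
  refine lipschitzWith_uncurry_of_dist_le fun x y u v => ?_
  calc ‖d (F x y) (F u v)‖
    _ ≤ ‖star a * d x u * a + star b * d y v * b‖ :=
      CStarAlgebra.norm_le_norm_of_nonneg_of_le (hd.nonneg _ _) (hF x y u v)
    _ ≤ ‖star a * d x u * a‖ + ‖star b * d y v * b‖ := norm_add_le _ _
    _ ≤ ‖a‖ ^ 2 * ‖d x u‖ + ‖b‖ ^ 2 * ‖d y v‖ :=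
      add_le_add (norm_star_mul_mul_le _ _) (norm_star_mul_mul_le _ _)

end IsCStarMetric

theorem coupled_fixed_point_star_contraction_general [StarOrderedRing A] [Nonempty X]
    (hd : IsCStarMetric d) (complete : IsCStarComplete d) {F : X → X → X} {a b : A}
    (hab : ‖a‖ ^ 2 + ‖b‖ ^ 2 < 1)
    (hF : ∀ x y u v, d (F x y) (F u v) ≤ star a * d x u * a + star b * d y v * b) :
    (∃! p, IsCoupledFixedPt F p) ∧ (∀ p, IsCoupledFixedPt F p → p.1 = p.2) ∧
      ∃! x, F x x = x := by
  let := hd.toMetricSpace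
  have := hd.completeSpace complete
  have existsUnique : ∃! p, IsCoupledFixedPt F p :=
    existsUnique_isCoupledFixedPt_of_lipschitzWith (mod_cast hab) (hd.lipschitzWith_uncurry hF)
  exact ⟨existsUnique, fun _ hp => hp.fst_eq_snd existsUnique,
    existsUnique_fixedPt_of_existsUnique_isCoupledFixedPt existsUnique⟩

end CStarMetric

lemma sq_add_sq_lt_one_of_lt_one_div_sqrt_two {r : ℝ} (hr₀ : 0 ≤ r) (hr : r < 1 / √2) :
    r ^ 2 + r ^ 2 < 1 := by
  rw [one_div, ← Real.sqrt_inv, Real.lt_sqrt hr₀] at hr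
  linarith

/-- **Theorem 2.1 (Statement 0).** Let `(X, A, d)` be a complete C*-algebra-valued metric
space and `F : X × X → X` satisfy
`d (F x y) (F u v) ⪯ a* ⬝ d x u ⬝ a + a* ⬝ d y v ⬝ a` for all `x y u v`, where `‖a‖ < 1/√2`.
Then `F` has a unique coupled fixed point `(x, y)`; moreover `x = y`, so `F` has a unique
fixed point in `X`. -/
theorem coupled_fixed_point_star_contraction
    {X : Type*} [Nonempty X] {A : Type*} [CStarAlgebra A]
    [PartialOrder A] [StarOrderedRing A]
    (d : X → X → A)
    (d_nonneg : ∀ x y, 0 ≤ d x y)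
    (d_eq_zero : ∀ x y, d x y = 0 ↔ x = y)
    (d_symm : ∀ x y, d x y = d y x)
    (d_triangle : ∀ x y z, d x y ≤ d x z + d z y)
    (complete : ∀ u : ℕ → X,
      (∀ p : ℕ, Filter.Tendsto (fun n => ‖d (u (n + p)) (u n)‖) Filter.atTop (nhds 0)) →
      ∃ x : X, Filter.Tendsto (fun n => ‖d (u n) x‖) Filter.atTop (nhds 0))
    (F : X → X → X) (a : A)
    (ha : ‖a‖ < 1 / Real.sqrt 2)
    (hF : ∀ x y u v : X, d (F x y) (F u v) ≤ star a * d x u * a + star a * d y v * a) :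
    (∃! p : X × X, F p.1 p.2 = p.1 ∧ F p.2 p.1 = p.2) ∧
    (∀ p : X × X, (F p.1 p.2 = p.1 ∧ F p.2 p.1 = p.2) → p.1 = p.2) ∧
    (∃! x : X, F x x = x) :=
  coupled_fixed_point_star_contraction_general
    ⟨d_nonneg, d_eq_zero, d_symm, d_triangle⟩ (isCStarComplete_of_forall_shift complete)
    (sq_add_sq_lt_one_of_lt_one_div_sqrt_two (norm_nonneg a) ha) hF
end

section
/- Let (X, A, d) be a C*-algebra-valued metric space and let F : X × X → X satisfy d(F(x,y), F(u,v)) ⪯ a* · d(x,u) · a + a* · d(y,v) · a for all x, y, u, v ∈ X, where a ∈ A. Given arbitrary x₀, y₀ ∈ X, define x_{n+1} = F(xₙ, yₙ), y_{n+1} = F(yₙ, xₙ), and set δₙ = d(xₙ, x_{n+1}) + d(yₙ, y_{n+1}). Then for every n ∈ ℕ, 0 ⪯ δₙ ⪯ ((√2·a)*)ⁿ · δ₀ · (√2·a)ⁿ. -/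
/-!
The two coordinates of the iteration are treated together: adding the contraction inequalities for
`F x y` and `F y x` produces every term `star a * _ * a` twice, and the factor `2` is absorbed into
the conjugating element as `√2 • a`. Conjugation is monotone, so the one-step bound iterates.
-/

theorem le_star_pow_mul_mul_pow {A : Type*} [Semiring A] [PartialOrder A] [StarRing A]
    [StarOrderedRing A] {u : ℕ → A} {b : A} (hu : ∀ n, u (n + 1) ≤ star b * u n * b) (n : ℕ) :
    u n ≤ star b ^ n * u 0 * b ^ n := by
  induction n with
  | zero => simp
  | succ n ih =>
    calc
      u (n + 1) ≤ star b * u n * b := hu n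
      _ ≤ star b * (star b ^ n * u 0 * b ^ n) * b := star_left_conjugate_le_conjugate ih b
      _ = star b ^ (n + 1) * u 0 * b ^ (n + 1) := by
        simp only [pow_succ' (star b), pow_succ b, mul_assoc]

theorem star_sqrt_smul_mul_mul_sqrt_smul {A : Type*} [NonUnitalNonAssocSemiring A] [Star A]
    [Module ℝ A] [StarModule ℝ A] [IsScalarTower ℝ A A] [SMulCommClass ℝ A A]
    {r : ℝ} (hr : 0 ≤ r) (a c : A) :
    star (√r • a) * c * (√r • a) = r • (star a * c * a) := by
  simp only [star_smul, star_trivial, smul_mul_assoc, mul_smul_comm, smul_smul,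
    Real.mul_self_sqrt hr]

theorem coupled_add_le_two_nsmul {X A : Type*} [NonUnitalNonAssocSemiring A] [PartialOrder A]
    [IsOrderedAddMonoid A] {d : X → X → A} {F : X → X → X} {a b : A}
    (hF : ∀ x y u v, d (F x y) (F u v) ≤ b * d x u * a + b * d y v * a) (x y u v : X) :
    d (F x y) (F u v) + d (F y x) (F v u) ≤ 2 • (b * (d x u + d y v) * a) :=
  calc
    d (F x y) (F u v) + d (F y x) (F v u)
        ≤ (b * d x u * a + b * d y v * a) + (b * d y v * a + b * d x u * a) :=
      add_le_add (hF x y u v) (hF y x v u)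
    _ = 2 • (b * (d x u + d y v) * a) := by
      rw [add_comm (b * d y v * a), ← two_nsmul, mul_add, add_mul]

theorem delta_estimate_general {X A : Type*} [Semiring A] [PartialOrder A] [StarRing A]
    [StarOrderedRing A] [Algebra ℝ A] [StarModule ℝ A]
    (d : X → X → A) (d_nonneg : ∀ x y, 0 ≤ d x y) (F : X → X → X) (a : A)
    (hF : ∀ x y u v, d (F x y) (F u v) ≤ star a * d x u * a + star a * d y v * a)
    (x y : ℕ → X) (hx : ∀ n, x (n + 1) = F (x n) (y n)) (hy : ∀ n, y (n + 1) = F (y n) (x n))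
    (δ : ℕ → A) (hδ : ∀ n, δ n = d (x n) (x (n + 1)) + d (y n) (y (n + 1))) (n : ℕ) :
    0 ≤ δ n ∧ δ n ≤ star (√2 • a) ^ n * δ 0 * (√2 • a) ^ n := by
  have δ_nonneg : 0 ≤ δ n := hδ n ▸ add_nonneg (d_nonneg _ _) (d_nonneg _ _)
  have δ_succ_le (k : ℕ) : δ (k + 1) ≤ star (√2 • a) * δ k * (√2 • a) :=
    calc
      δ (k + 1) = d (F (x k) (y k)) (F (x (k + 1)) (y (k + 1))) +
          d (F (y k) (x k)) (F (y (k + 1)) (x (k + 1))) := by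
        rw [hδ, hx (k + 1), hy (k + 1), hx k, hy k]
      _ ≤ 2 • (star a * δ k * a) := hδ k ▸ coupled_add_le_two_nsmul hF _ _ _ _
      _ = star (√2 • a) * δ k * (√2 • a) := by
        rw [star_sqrt_smul_mul_mul_sqrt_smul zero_le_two, two_smul ℝ, two_smul ℕ]
  exact ⟨δ_nonneg, le_star_pow_mul_mul_pow δ_succ_le n⟩

/-- In a C*-algebra-valued metric space, if
`d (F x y) (F u v) ⪯ a* ⬝ d x u ⬝ a + a* ⬝ d y v ⬝ a`, and `x_{n+1} = F xₙ yₙ`,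
`y_{n+1} = F yₙ xₙ`, `δₙ = d xₙ x_{n+1} + d yₙ y_{n+1}`, then for every `n`,
`0 ⪯ δₙ ⪯ ((√2•a)*)ⁿ ⬝ δ₀ ⬝ (√2•a)ⁿ`. -/
theorem delta_estimate
    {X : Type*} {A : Type*} [CStarAlgebra A]
    [PartialOrder A] [StarOrderedRing A]
    (d : X → X → A)
    (d_nonneg : ∀ x y, 0 ≤ d x y)
    (d_eq_zero : ∀ x y, d x y = 0 ↔ x = y)
    (d_symm : ∀ x y, d x y = d y x)
    (d_triangle : ∀ x y z, d x y ≤ d x z + d z y)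
    (F : X → X → X) (a : A)
    (hF : ∀ x y u v : X, d (F x y) (F u v) ≤ star a * d x u * a + star a * d y v * a)
    (x y : ℕ → X)
    (hx : ∀ n, x (n + 1) = F (x n) (y n))
    (hy : ∀ n, y (n + 1) = F (y n) (x n))
    (δ : ℕ → A)
    (hδ : ∀ n, δ n = d (x n) (x (n + 1)) + d (y n) (y (n + 1))) :
    ∀ n : ℕ, 0 ≤ δ n ∧
      δ n ≤ (star (Real.sqrt 2 • a)) ^ n * δ 0 * (Real.sqrt 2 • a) ^ n :=
  delta_estimate_general d d_nonneg F a hF x y hx hy δ hδ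
end

section
/- Let (X, A, d) be a complete C*-algebra-valued metric space and let F : X × X → X satisfy d(F(x,y), F(u,v)) ⪯ a · d(F(x,y), x) + b · d(F(u,v), u) for all x, y, u, v ∈ X, where a and b are positive elements of A commuting with every element of A, and ‖a‖ + ‖b‖ < 1. Then F has a unique coupled fixed point (x, y); moreover x = y, so F has a unique fixed point in X. -/
/-!
Taking norms turns `d` into a real-valued quasi-metric `D` for which the diagonal map
`T x = F x x` satisfies Kannan's inequality with constants `α = ‖a‖` and `β = ‖b‖`. Applied to `T x`
and `x`, this inequality shows that the displacement `D (T x) x` shrinks by the factor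
`β / (1 - α) < 1` along each orbit, so orbits are Cauchy, and their limits are fixed by `T`.
Conversely the inequality for `F` gives `d x u ≤ 0` whenever `F x y = x` and `F u v = u`, whatever
`y` and `v` are; this identifies the two coordinates of a coupled fixed point with each other and
with the fixed point of `T`.
-/

open Filter Function Topology

/-- Quasi-metrics, that is, metrics without the symmetry axiom, with values in an ordered additive
structure `M`. The cases used are `M = ℝ` and `M` a C⋆-algebra. -/
structure IsQuasiMetric {X M : Type*} [Zero M] [Add M] [LE M] (d : X → X → M) : Prop where
  nonneg : ∀ x y, 0 ≤ d x y
  eq_zero_iff : ∀ x y, d x y = 0 ↔ x = y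
  triangle : ∀ x y z, d x y ≤ d x z + d z y

/-- The Cauchy condition for a real-valued distance `D`, with the gap `p` fixed as `n → ∞`. It is
weaker than the usual one: partial sums of the harmonic series satisfy it. -/
def FixedGapCauchy {X : Type*} (D : X → X → ℝ) (u : ℕ → X) : Prop :=
  ∀ p : ℕ, Tendsto (fun n => D (u (n + p)) (u n)) atTop (𝓝 0)

/-- Completeness of a real-valued distance `D` with respect to `FixedGapCauchy` sequences. As `D`
may fail to be symmetric, the limit is placed in the second argument. -/
def FixedGapComplete {X : Type*} (D : X → X → ℝ) : Prop :=
  ∀ u : ℕ → X, FixedGapCauchy D u → ∃ x, Tendsto (fun n => D (u n) x) atTop (𝓝 0)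

/-- Kannan's contraction condition for `f` relative to `g`. A Kannan self-map is the case `g = id`;
a coupled Kannan map `F : X → X → X` is the case `f = uncurry F`, `g = Prod.fst`. -/
def KannanWith {ι X M : Type*} [Add M] [Mul M] [LE M]
    (d : X → X → M) (a b : M) (f g : ι → X) : Prop :=
  ∀ s t, d (f s) (f t) ≤ a * d (f s) (g s) + b * d (f t) (g t)

namespace IsQuasiMetric

theorem self_eq_zero {X M : Type*} [Zero M] [Add M] [LE M] {d : X → X → M}
    (hd : IsQuasiMetric d) (x : X) : d x x = 0 :=
  (hd.eq_zero_iff x x).2 rfl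

theorem norm {X A : Type*} [NonUnitalCStarAlgebra A] [PartialOrder A] [StarOrderedRing A]
    {d : X → X → A} (hd : IsQuasiMetric d) : IsQuasiMetric fun x y => ‖d x y‖ where
  nonneg _ _ := norm_nonneg _
  eq_zero_iff x y := norm_eq_zero.trans (hd.eq_zero_iff x y)
  triangle x y z :=
    (CStarAlgebra.norm_le_norm_of_nonneg_of_le (hd.nonneg x y) (hd.triangle x y z)).trans
      (norm_add_le _ _)

theorem fixedGapCauchy_of_tendsto_succ {X : Type*} {D : X → X → ℝ} (hD : IsQuasiMetric D)
    {u : ℕ → X} (hu : Tendsto (fun n => D (u (n + 1)) (u n)) atTop (𝓝 0)) :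
    FixedGapCauchy D u := by
  intro p
  induction p with
  | zero => simp [hD.self_eq_zero]
  | succ p ih =>
    refine squeeze_zero (fun n => hD.nonneg _ _) (fun n => hD.triangle _ _ (u (n + p))) ?_
    simpa [← add_assoc] using (hu.comp (tendsto_add_atTop_nat p)).add ih

end IsQuasiMetric

namespace KannanWith

theorem comp {ι κ X M : Type*} [Add M] [Mul M] [LE M] {d : X → X → M} {a b : M} {f g : ι → X}
    (hf : KannanWith d a b f g) (h : κ → ι) : KannanWith d a b (f ∘ h) (g ∘ h) :=
  fun s t => hf (h s) (h t)

theorem norm {ι X A : Type*} [NonUnitalCStarAlgebra A] [PartialOrder A] [StarOrderedRing A]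
    {d : X → X → A} (hd : ∀ x y, 0 ≤ d x y) {a b : A} {f g : ι → X} (hf : KannanWith d a b f g) :
    KannanWith (fun x y => ‖d x y‖) ‖a‖ ‖b‖ f g := fun s t =>
  calc ‖d (f s) (f t)‖
    _ ≤ ‖a * d (f s) (g s) + b * d (f t) (g t)‖ :=
      CStarAlgebra.norm_le_norm_of_nonneg_of_le (hd _ _) (hf s t)
    _ ≤ ‖a * d (f s) (g s)‖ + ‖b * d (f t) (g t)‖ := norm_add_le _ _
    _ ≤ ‖a‖ * ‖d (f s) (g s)‖ + ‖b‖ * ‖d (f t) (g t)‖ :=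
      add_le_add (norm_mul_le _ _) (norm_mul_le _ _)

theorem eq_of_coincidence {ι X M : Type*} [NonUnitalNonAssocSemiring M] [PartialOrder M]
    {d : X → X → M} (hd : IsQuasiMetric d) {a b : M} {f g : ι → X} (hf : KannanWith d a b f g)
    {s t : ι} (hs : f s = g s) (ht : f t = g t) : g s = g t := by
  have h : d (g s) (g t) ≤ 0 := by
    simpa only [hs, ht, hd.self_eq_zero, mul_zero, add_zero] using hf s t
  exact (hd.eq_zero_iff _ _).1 (h.antisymm (hd.nonneg _ _))

section SelfMap

variable {X : Type*} {D : X → X → ℝ} {α β : ℝ} {T : X → X}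

theorem displacement_map_le (hT : KannanWith D α β T id) (hα : α < 1) (x : X) :
    D (T (T x)) (T x) ≤ β / (1 - α) * D (T x) x := by
  have h : D (T (T x)) (T x) ≤ α * D (T (T x)) (T x) + β * D (T x) x := hT (T x) x
  rw [div_mul_eq_mul_div, le_div_iff₀ (sub_pos.2 hα)]
  linarith

theorem displacement_iterate_le (hT : KannanWith D α β T id) (hα : α < 1) (hβ : 0 ≤ β)
    (x : X) (n : ℕ) :
    D (T^[n + 1] x) (T^[n] x) ≤ (β / (1 - α)) ^ n * D (T x) x := by
  have ratio_nonneg : 0 ≤ β / (1 - α) := div_nonneg hβ (sub_pos.2 hα).le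
  induction n with
  | zero => simp
  | succ n ih =>
    calc D (T^[n + 2] x) (T^[n + 1] x)
      _ ≤ β / (1 - α) * D (T^[n + 1] x) (T^[n] x) := by
        simpa only [iterate_succ_apply'] using hT.displacement_map_le hα (T^[n] x)
      _ ≤ β / (1 - α) * ((β / (1 - α)) ^ n * D (T x) x) :=
        mul_le_mul_of_nonneg_left ih ratio_nonneg
      _ = (β / (1 - α)) ^ (n + 1) * D (T x) x := by ring

theorem tendsto_displacement_iterate (hD : ∀ x y, 0 ≤ D x y) (hT : KannanWith D α β T id)
    (hβ : 0 ≤ β) (hαβ : α + β < 1) (x : X) :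
    Tendsto (fun n => D (T^[n + 1] x) (T^[n] x)) atTop (𝓝 0) := by
  have hα : α < 1 := by linarith
  have ratio_nonneg : 0 ≤ β / (1 - α) := div_nonneg hβ (sub_pos.2 hα).le
  have ratio_lt_one : β / (1 - α) < 1 := (div_lt_one (sub_pos.2 hα)).2 (by linarith)
  refine squeeze_zero (fun n => hD _ _) (hT.displacement_iterate_le hα hβ x) ?_
  simpa using (tendsto_pow_atTop_nhds_zero_of_lt_one ratio_nonneg ratio_lt_one).mul_const _

theorem isFixedPt_of_tendsto (hD : IsQuasiMetric D) (hT : KannanWith D α β T id) (hα : α < 1)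
    {ι : Type*} {l : Filter ι} [l.NeBot] {u : ι → X} {x : X}
    (hu : Tendsto (fun i => D (T (u i)) (u i)) l (𝓝 0))
    (hx : Tendsto (fun i => D (T (u i)) x) l (𝓝 0)) : IsFixedPt T x := by
  have bound (i : ι) : (1 - α) * D (T x) x ≤ β * D (T (u i)) (u i) + D (T (u i)) x := by
    have triangle := hD.triangle (T x) x (T (u i))
    have kannan : D (T x) (T (u i)) ≤ α * D (T x) x + β * D (T (u i)) (u i) := hT x (u i)
    linarith
  have bound_tendsto : Tendsto (fun i => β * D (T (u i)) (u i) + D (T (u i)) x) l (𝓝 0) := by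
    simpa using (hu.const_mul β).add hx
  have displacement_nonpos : D (T x) x ≤ 0 :=
    nonpos_of_mul_nonpos_right (ge_of_tendsto' bound_tendsto bound) (sub_pos.2 hα)
  exact (hD.eq_zero_iff _ _).1 (displacement_nonpos.antisymm (hD.nonneg _ _))

theorem exists_isFixedPt [Nonempty X] (hD : IsQuasiMetric D) (complete : FixedGapComplete D)
    (hT : KannanWith D α β T id) (hβ : 0 ≤ β) (hαβ : α + β < 1) : ∃ x, IsFixedPt T x := by
  obtain ⟨x₀⟩ := ‹Nonempty X›
  have displacement_tendsto := hT.tendsto_displacement_iterate hD.nonneg hβ hαβ x₀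
  have orbit_cauchy : FixedGapCauchy D fun n => T^[n] x₀ :=
    hD.fixedGapCauchy_of_tendsto_succ displacement_tendsto
  obtain ⟨x, hx⟩ := complete _ orbit_cauchy
  refine ⟨x, hT.isFixedPt_of_tendsto hD (by linarith) (l := atTop) (u := fun n => T^[n] x₀) ?_ ?_⟩
  · simpa only [iterate_succ_apply'] using displacement_tendsto
  · simpa only [comp_def, iterate_succ_apply'] using hx.comp (tendsto_add_atTop_nat 1)

end SelfMap

end KannanWith

theorem coupled_fixed_point_kannan_general {X : Type*} [Nonempty X] {A : Type*}
    [NonUnitalCStarAlgebra A] [PartialOrder A] [StarOrderedRing A] {d : X → X → A}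
    (hd : IsQuasiMetric d) (complete : FixedGapComplete fun x y => ‖d x y‖)
    {F : X → X → X} {a b : A} (hab : ‖a‖ + ‖b‖ < 1)
    (hF : KannanWith d a b (uncurry F) Prod.fst) :
    (∃! p : X × X, F p.1 p.2 = p.1 ∧ F p.2 p.1 = p.2) ∧
    (∀ p : X × X, (F p.1 p.2 = p.1 ∧ F p.2 p.1 = p.2) → p.1 = p.2) ∧
    (∃! x : X, F x x = x) := by
  have eq_of_fixed {x y u v : X} (hx : F x y = x) (hu : F u v = u) : x = u :=
    hF.eq_of_coincidence hd (s := (x, y)) (t := (u, v)) hx hu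
  have diagonal : KannanWith d a b (fun x => F x x) id := hF.comp fun x => (x, x)
  obtain ⟨x, hx⟩ : ∃ x, F x x = x :=
    (diagonal.norm hd.nonneg).exists_isFixedPt hd.norm complete (norm_nonneg b) hab
  exact ⟨⟨(x, x), ⟨hx, hx⟩, fun _ hp => Prod.ext (eq_of_fixed hp.1 hx) (eq_of_fixed hp.2 hx)⟩,
    fun _ hp => eq_of_fixed hp.1 hp.2, ⟨x, hx, fun _ hy => eq_of_fixed hy hx⟩⟩

/-- **Theorem 2.4 (Statement 7).** Let `(X, A, d)` be a complete C*-algebra-valued metric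
space and `F : X × X → X` satisfy
`d (F x y) (F u v) ⪯ a ⬝ d (F x y) x + b ⬝ d (F u v) u` where `a, b` are positive central
elements with `‖a‖ + ‖b‖ < 1`.  Then `F` has a unique coupled fixed point `(x, y)`; moreover
`x = y`, so `F` has a unique fixed point. -/
theorem coupled_fixed_point_kannan
    {X : Type*} [Nonempty X] {A : Type*} [CStarAlgebra A]
    [PartialOrder A] [StarOrderedRing A]
    (d : X → X → A)
    (d_nonneg : ∀ x y, 0 ≤ d x y)
    (d_eq_zero : ∀ x y, d x y = 0 ↔ x = y)
    (d_symm : ∀ x y, d x y = d y x)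
    (d_triangle : ∀ x y z, d x y ≤ d x z + d z y)
    (complete : ∀ u : ℕ → X,
      (∀ p : ℕ, Filter.Tendsto (fun n => ‖d (u (n + p)) (u n)‖) Filter.atTop (nhds 0)) →
      ∃ x : X, Filter.Tendsto (fun n => ‖d (u n) x‖) Filter.atTop (nhds 0))
    (F : X → X → X) (a b : A)
    (ha_pos : 0 ≤ a) (ha_comm : ∀ c : A, a * c = c * a)
    (hb_pos : 0 ≤ b) (hb_comm : ∀ c : A, b * c = c * b)
    (hab : ‖a‖ + ‖b‖ < 1)
    (hF : ∀ x y u v : X, d (F x y) (F u v) ≤ a * d (F x y) x + b * d (F u v) u) :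
    (∃! p : X × X, F p.1 p.2 = p.1 ∧ F p.2 p.1 = p.2) ∧
    (∀ p : X × X, (F p.1 p.2 = p.1 ∧ F p.2 p.1 = p.2) → p.1 = p.2) ∧
    (∃! x : X, F x x = x) :=
  coupled_fixed_point_kannan_general ⟨d_nonneg, d_eq_zero, d_triangle⟩ complete hab
    fun s t => hF s.1 s.2 t.1 t.2
end

section
/- Let (X, A, d) be a complete C*-algebra-valued metric space and let F : X × X → X satisfy d(F(x,y), F(u,v)) ⪯ a · d(F(x,y), x) + a · d(F(u,v), u) for all x, y, u, v ∈ X, where a is a positive element of A commuting with every element of A and ‖a‖ < 1/2. Then F has a unique fixed point in X, i.e. a unique x ∈ X with F(x,x) = x. -/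
/-!
Only the diagonal map `T x = F x x` and the real-valued function `‖d x y‖` matter: the norm is
monotone on positive elements, so the hypotheses on `d` and `F` pass to norms and `T` is a Kannan
map with constant `k = ‖a‖ < 1 / 2`. Along an orbit of `T` the displacement `‖d (T x) x‖` shrinks
by the factor `k / (1 - k) < 1` at each step. The Kannan inequality bounds the distance between two
points of the orbit by the displacements of their predecessors, so the orbit is Cauchy, and it
forces the displacement of the limit to vanish.
-/

open Filter Function Topology

/-- `T` is a Kannan map with constant `k` for the distance `D`: images are close together when
both points are moved little by `T`. Nothing is assumed of `D`, and the displacement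
is written `D (T x) x`, the order of the arguments being relevant as `D` may fail to be
symmetric. -/
def IsKannanWith {X : Type*} (D : X → X → ℝ) (k : ℝ) (T : X → X) : Prop :=
  ∀ x y, D (T x) (T y) ≤ k * (D (T x) x + D (T y) y)

namespace IsKannanWith

variable {X : Type*} {D : X → X → ℝ} {k : ℝ} {T : X → X}

theorem displacement_map_le (hT : IsKannanWith D k T) (hk : k < 1) (x : X) :
    D (T (T x)) (T x) ≤ k / (1 - k) * D (T x) x := by
  rw [div_mul_eq_mul_div, le_div_iff₀ (sub_pos.2 hk)]
  linarith [hT (T x) x]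

theorem displacement_iterate_le (hT : IsKannanWith D k T) (hk₀ : 0 ≤ k) (hk : k < 1)
    (x : X) (n : ℕ) :
    D (T (T^[n] x)) (T^[n] x) ≤ (k / (1 - k)) ^ n * D (T x) x := by
  refine le_geom (u := fun n => D (T (T^[n] x)) (T^[n] x))
    (div_nonneg hk₀ (sub_nonneg.2 hk.le)) n fun m _ => ?_
  simpa only [iterate_succ_apply'] using hT.displacement_map_le hk (T^[m] x)

theorem tendsto_displacement_iterate (hT : IsKannanWith D k T) (D_nonneg : ∀ x y, 0 ≤ D x y)
    (hk₀ : 0 ≤ k) (hk : k < 1 / 2) (x : X) :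
    Tendsto (fun n => D (T (T^[n] x)) (T^[n] x)) atTop (𝓝 0) := by
  have hk₁ : k < 1 := by linarith
  have ratio_nonneg : 0 ≤ k / (1 - k) := div_nonneg hk₀ (sub_nonneg.2 hk₁.le)
  have ratio_lt_one : k / (1 - k) < 1 := by
    rw [div_lt_one (sub_pos.2 hk₁)]
    linarith
  refine squeeze_zero (fun _ => D_nonneg _ _) (hT.displacement_iterate_le hk₀ hk₁ x) ?_
  simpa only [zero_mul] using
    (tendsto_pow_atTop_nhds_zero_of_lt_one ratio_nonneg ratio_lt_one).mul_const (D (T x) x)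

theorem tendsto_dist_map_map {ι : Type*} {l : Filter ι} {u v : ι → X}
    (hT : IsKannanWith D k T) (D_nonneg : ∀ x y, 0 ≤ D x y)
    (hu : Tendsto (fun i => D (T (u i)) (u i)) l (𝓝 0))
    (hv : Tendsto (fun i => D (T (v i)) (v i)) l (𝓝 0)) :
    Tendsto (fun i => D (T (u i)) (T (v i))) l (𝓝 0) := by
  refine squeeze_zero (fun _ => D_nonneg _ _) (fun i => hT (u i) (v i)) ?_
  simpa only [add_zero, mul_zero] using (hu.add hv).const_mul k

theorem tendsto_dist_iterate_add (hT : IsKannanWith D k T) (D_nonneg : ∀ x y, 0 ≤ D x y)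
    (hk₀ : 0 ≤ k) (hk : k < 1 / 2) (x : X) (p : ℕ) :
    Tendsto (fun n => D (T^[n + p] x) (T^[n] x)) atTop (𝓝 0) := by
  have displacement := hT.tendsto_displacement_iterate D_nonneg hk₀ hk x
  have shifted := hT.tendsto_dist_map_map D_nonneg
    ((tendsto_add_atTop_iff_nat p).2 displacement) displacement
  rw [← tendsto_add_atTop_iff_nat 1]
  simpa only [add_right_comm _ 1 p, iterate_succ_apply'] using shifted

theorem displacement_nonpos_of_tendsto {ι : Type*} {l : Filter ι} [l.NeBot] {u : ι → X} {x : X}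
    (hT : IsKannanWith D k T) (D_triangle : ∀ x y z, D x y ≤ D x z + D z y) (hk : k < 1)
    (hu : Tendsto (fun i => D (T (u i)) (u i)) l (𝓝 0))
    (hx : Tendsto (fun i => D (T (u i)) x) l (𝓝 0)) :
    D (T x) x ≤ 0 := by
  have bound (i : ι) : D (T x) x ≤ k * (D (T x) x + D (T (u i)) (u i)) + D (T (u i)) x :=
    (D_triangle _ _ _).trans (add_le_add_left (hT x (u i)) _)
  have displacement_le : D (T x) x ≤ k * (D (T x) x + 0) + 0 :=
    ge_of_tendsto' (((hu.const_add _).const_mul k).add hx) bound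
  nlinarith

theorem eq_of_isFixedPt (hT : IsKannanWith D k T) (D_nonneg : ∀ x y, 0 ≤ D x y)
    (D_eq_zero : ∀ x y, D x y = 0 ↔ x = y) {x y : X} (hx : IsFixedPt T x) (hy : IsFixedPt T y) :
    x = y := by
  have dist_le : D x y ≤ k * (D x x + D y y) := by simpa only [hx.eq, hy.eq] using hT x y
  rw [(D_eq_zero x x).2 rfl, (D_eq_zero y y).2 rfl, add_zero, mul_zero] at dist_le
  exact (D_eq_zero x y).1 (dist_le.antisymm (D_nonneg x y))

theorem existsUnique_isFixedPt [Nonempty X] (hT : IsKannanWith D k T)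
    (D_nonneg : ∀ x y, 0 ≤ D x y) (D_eq_zero : ∀ x y, D x y = 0 ↔ x = y)
    (D_triangle : ∀ x y z, D x y ≤ D x z + D z y)
    (complete : ∀ u : ℕ → X,
      (∀ p : ℕ, Tendsto (fun n => D (u (n + p)) (u n)) atTop (𝓝 0)) →
      ∃ x : X, Tendsto (fun n => D (u n) x) atTop (𝓝 0))
    (hk₀ : 0 ≤ k) (hk : k < 1 / 2) :
    ∃! x, IsFixedPt T x := by
  obtain ⟨x₀⟩ := ‹Nonempty X›
  obtain ⟨x, hx⟩ := complete (fun n => T^[n] x₀) (hT.tendsto_dist_iterate_add D_nonneg hk₀ hk x₀)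
  have image_tendsto : Tendsto (fun n => D (T (T^[n] x₀)) x) atTop (𝓝 0) := by
    simpa only [iterate_succ_apply'] using (tendsto_add_atTop_iff_nat 1).2 hx
  have displacement_nonpos : D (T x) x ≤ 0 :=
    hT.displacement_nonpos_of_tendsto D_triangle (by linarith)
      (hT.tendsto_displacement_iterate D_nonneg hk₀ hk x₀) image_tendsto
  have fixed : IsFixedPt T x :=
    (D_eq_zero _ _).1 (displacement_nonpos.antisymm (D_nonneg _ _))
  exact ⟨x, fixed, fun y hy => hT.eq_of_isFixedPt D_nonneg D_eq_zero hy fixed⟩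

end IsKannanWith

section CStarAlgebra

variable {A : Type*} [NonUnitalCStarAlgebra A] [PartialOrder A] [StarOrderedRing A]

theorem norm_le_norm_add_norm_of_nonneg_of_le_add {b c e : A} (hb : 0 ≤ b) (h : b ≤ c + e) :
    ‖b‖ ≤ ‖c‖ + ‖e‖ :=
  (CStarAlgebra.norm_le_norm_of_nonneg_of_le hb h).trans (norm_add_le c e)

variable {X : Type*} {d : X → X → A} {T : X → X} {a : A}

theorem isKannanWith_norm (d_nonneg : ∀ x y, 0 ≤ d x y)
    (hT : ∀ x y, d (T x) (T y) ≤ a * d (T x) x + a * d (T y) y) :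
    IsKannanWith (fun x y => ‖d x y‖) ‖a‖ T := fun x y =>
  calc ‖d (T x) (T y)‖ ≤ ‖a * d (T x) x‖ + ‖a * d (T y) y‖ :=
        norm_le_norm_add_norm_of_nonneg_of_le_add (d_nonneg _ _) (hT x y)
    _ ≤ ‖a‖ * ‖d (T x) x‖ + ‖a‖ * ‖d (T y) y‖ := add_le_add (norm_mul_le _ _) (norm_mul_le _ _)
    _ = ‖a‖ * (‖d (T x) x‖ + ‖d (T y) y‖) := (mul_add _ _ _).symm

theorem fixed_point_kannan_corollary_general [Nonempty X]
    (d_nonneg : ∀ x y, 0 ≤ d x y)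
    (d_eq_zero : ∀ x y, d x y = 0 ↔ x = y)
    (d_triangle : ∀ x y z, d x y ≤ d x z + d z y)
    (complete : ∀ u : ℕ → X,
      (∀ p : ℕ, Tendsto (fun n => ‖d (u (n + p)) (u n)‖) atTop (𝓝 0)) →
      ∃ x : X, Tendsto (fun n => ‖d (u n) x‖) atTop (𝓝 0))
    (ha : ‖a‖ < 1 / 2)
    (hT : ∀ x y, d (T x) (T y) ≤ a * d (T x) x + a * d (T y) y) :
    ∃! x, IsFixedPt T x :=
  (isKannanWith_norm d_nonneg hT).existsUnique_isFixedPt (fun _ _ => norm_nonneg _)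
    (fun x y => norm_eq_zero.trans (d_eq_zero x y))
    (fun x y z => norm_le_norm_add_norm_of_nonneg_of_le_add (d_nonneg x y) (d_triangle x y z))
    complete (norm_nonneg a) ha

end CStarAlgebra

/-- **Corollary 2.5 (Statement 8).** Let `(X, A, d)` be a complete C*-algebra-valued metric
space and `F : X × X → X` satisfy
`d (F x y) (F u v) ⪯ a ⬝ d (F x y) x + a ⬝ d (F u v) u` where `a` is a positive central
element with `‖a‖ < 1/2`.  Then `F` has a unique fixed point in `X`. -/
theorem fixed_point_kannan_corollary
    {X : Type*} [Nonempty X] {A : Type*} [CStarAlgebra A]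
    [PartialOrder A] [StarOrderedRing A]
    (d : X → X → A)
    (d_nonneg : ∀ x y, 0 ≤ d x y)
    (d_eq_zero : ∀ x y, d x y = 0 ↔ x = y)
    (d_symm : ∀ x y, d x y = d y x)
    (d_triangle : ∀ x y z, d x y ≤ d x z + d z y)
    (complete : ∀ u : ℕ → X,
      (∀ p : ℕ, Filter.Tendsto (fun n => ‖d (u (n + p)) (u n)‖) Filter.atTop (nhds 0)) →
      ∃ x : X, Filter.Tendsto (fun n => ‖d (u n) x‖) Filter.atTop (nhds 0))
    (F : X → X → X) (a : A)
    (ha_pos : 0 ≤ a) (ha_comm : ∀ c : A, a * c = c * a)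
    (ha : ‖a‖ < 1 / 2)
    (hF : ∀ x y u v : X, d (F x y) (F u v) ≤ a * d (F x y) x + a * d (F u v) u) :
    ∃! x : X, F x x = x :=
  fixed_point_kannan_corollary_general d_nonneg d_eq_zero d_triangle complete ha
    fun x y => hF x x y y
end

section
/- Let (X, A, d) be a complete C*-algebra-valued metric space and let F : X × X → X satisfy d(F(x,y), F(u,v)) ⪯ a · d(F(x,y), u) + b · d(F(u,v), x) for all x, y, u, v ∈ X, where a and b are positive elements of A commuting with every element of A, and ‖a‖ + ‖b‖ < 1. Then F has a unique coupled fixed point (x, y); moreover x = y, so F has a unique fixed point in X. -/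
/-!
The norm is monotone on the positive cone, so `‖d x y‖` is an ordinary metric and `F` satisfies
the scalar inequality with coefficients `‖a‖` and `‖b‖`. That inequality ignores the second
arguments of `F`: any `x = F x y` and `u = F u v` coincide, and only the diagonal map
`x ↦ F x x` has to be shown to have a fixed point. Averaging the inequality with its mirror image
makes both coefficients equal to `(‖a‖ + ‖b‖) / 2 < 1 / 2`, which is Chatterjea's condition: the
iterates have geometrically decreasing consecutive distances, and their limit is fixed.
-/

open Filter Function
open scoped Topology

section Iterate

variable {X : Type*} [PseudoMetricSpace X] {T : X → X} {r : ℝ}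

theorem dist_iterate_succ_le_pow_mul (hr : 0 ≤ r)
    (hT : ∀ x, dist (T x) (T (T x)) ≤ r * dist x (T x)) (x : X) (n : ℕ) :
    dist (T^[n] x) (T^[n + 1] x) ≤ dist x (T x) * r ^ n := by
  induction n with
  | zero => simp
  | succ n ih =>
    calc dist (T^[n + 1] x) (T^[n + 1 + 1] x)
        ≤ r * dist (T^[n] x) (T^[n + 1] x) := by
          simpa only [iterate_succ_apply'] using hT (T^[n] x)
      _ ≤ r * (dist x (T x) * r ^ n) := by gcongr
      _ = dist x (T x) * r ^ (n + 1) := by ring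

theorem cauchySeq_iterate_of_dist_le (hr : 0 ≤ r) (hr_lt : r < 1)
    (hT : ∀ x, dist (T x) (T (T x)) ≤ r * dist x (T x)) (x : X) :
    CauchySeq fun n => T^[n] x :=
  cauchySeq_of_le_geometric r (dist x (T x)) hr_lt (dist_iterate_succ_le_pow_mul hr hT x)

end Iterate

/-- The two-coefficient Chatterjea condition on a self-map `T` of a metric space; Chatterjea's
original condition is the case `α = β < 1 / 2`. -/
def IsChatterjea {X : Type*} [PseudoMetricSpace X] (α β : ℝ) (T : X → X) : Prop :=
  ∀ x y, dist (T x) (T y) ≤ α * dist (T x) y + β * dist (T y) x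

namespace IsChatterjea

section PseudoMetricSpace

variable {X : Type*} [PseudoMetricSpace X] {α β : ℝ} {T : X → X}

theorem average (hT : IsChatterjea α β T) : IsChatterjea ((α + β) / 2) ((α + β) / 2) T := by
  intro x y
  have h_swap := hT y x
  rw [dist_comm (T y)] at h_swap
  linarith [hT x y]

theorem dist_apply_apply_le (hT : IsChatterjea α β T) (hα : 0 ≤ α) (hα_lt : α < 1) (x : X) :
    dist (T x) (T (T x)) ≤ α / (1 - α) * dist x (T x) := by
  have h : dist (T x) (T (T x)) ≤ α * (dist x (T x) + dist (T x) (T (T x))) :=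
    calc dist (T x) (T (T x)) = dist (T (T x)) (T x) := dist_comm _ _
      _ ≤ α * dist (T (T x)) x := by simpa using hT (T x) x
      _ ≤ α * (dist x (T x) + dist (T x) (T (T x))) := by
        rw [dist_comm _ x]
        gcongr
        exact dist_triangle _ _ _
  rw [div_mul_eq_mul_div, le_div_iff₀ (sub_pos.2 hα_lt)]
  linarith

theorem cauchySeq_iterate (hT : IsChatterjea α β T) (hα : 0 ≤ α) (hα_lt : α < 1 / 2) (x : X) :
    CauchySeq fun n => T^[n] x :=
  have h_pos : 0 < 1 - α := by linarith
  cauchySeq_iterate_of_dist_le (div_nonneg hα h_pos.le) ((div_lt_one h_pos).2 (by linarith))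
    (hT.dist_apply_apply_le hα (by linarith)) x

end PseudoMetricSpace

variable {X : Type*} [MetricSpace X] {α β : ℝ} {T : X → X}

theorem isFixedPt_of_tendsto (hT : IsChatterjea α β T) (hα_lt : α < 1) {ι : Type*}
    {l : Filter ι} [l.NeBot] {u : ι → X} {x : X} (hu : Tendsto u l (𝓝 x))
    (hTu : Tendsto (fun i => T (u i)) l (𝓝 x)) : IsFixedPt T x := by
  have h : dist (T x) x ≤ α * dist (T x) x + β * dist x x :=
    le_of_tendsto_of_tendsto' (tendsto_const_nhds.dist hTu)
      (((tendsto_const_nhds.dist hu).const_mul α).add ((hTu.dist tendsto_const_nhds).const_mul β))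
      fun i => hT x (u i)
  rw [dist_self, mul_zero, add_zero] at h
  exact dist_le_zero.1 (by nlinarith)

theorem exists_isFixedPt [CompleteSpace X] [Nonempty X] (hT : IsChatterjea α β T) (hα : 0 ≤ α)
    (hα_lt : α < 1 / 2) : ∃ x, IsFixedPt T x := by
  obtain ⟨x₀⟩ := ‹Nonempty X›
  obtain ⟨x, hx⟩ := cauchySeq_tendsto_of_complete (hT.cauchySeq_iterate hα hα_lt x₀)
  refine ⟨x, hT.isFixedPt_of_tendsto (by linarith) hx ?_⟩
  simpa only [comp_def, iterate_succ_apply'] using hx.comp (tendsto_add_atTop_nat 1)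

end IsChatterjea

section Coupled

variable {X : Type*} [MetricSpace X] {α β : ℝ} {F : X → X → X}

theorem eq_of_apply_eq_left (hαβ : α + β < 1)
    (hF : ∀ x y u v, dist (F x y) (F u v) ≤ α * dist (F x y) u + β * dist (F u v) x)
    {x y u v : X} (hx : F x y = x) (hu : F u v = u) : x = u := by
  have h := hF x y u v
  rw [hx, hu, dist_comm u x] at h
  exact dist_le_zero.1 (by nlinarith)

theorem exists_diagonal_fixedPoint [CompleteSpace X] [Nonempty X] (h_nonneg : 0 ≤ α + β)
    (hαβ : α + β < 1)
    (hF : ∀ x y u v, dist (F x y) (F u v) ≤ α * dist (F x y) u + β * dist (F u v) x) :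
    ∃ x, F x x = x :=
  have h_diag : IsChatterjea α β fun x => F x x := fun x u => hF x x u u
  h_diag.average.exists_isFixedPt (by linarith) (by linarith)

end Coupled

/-- A metric with values in an ordered additive structure `A`. For a C*-algebra `A` with its
canonical order, this is a C*-algebra-valued metric. -/
structure IsValuedMetric {X A : Type*} [Zero A] [Add A] [LE A] (d : X → X → A) : Prop where
  nonneg : ∀ x y, 0 ≤ d x y
  eq_zero_iff : ∀ x y, d x y = 0 ↔ x = y
  symm : ∀ x y, d x y = d y x
  triangle : ∀ x y z, d x y ≤ d x z + d z y

namespace IsValuedMetric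

variable {X A : Type*} [NonUnitalCStarAlgebra A] [PartialOrder A] [StarOrderedRing A]
  {d : X → X → A}

/-- The metric space structure with distance `‖d x y‖` induced by a C*-algebra-valued metric `d`;
it has the same convergent sequences and the same Cauchy sequences as `d`. -/
abbrev toMetricSpace (hd : IsValuedMetric d) : MetricSpace X where
  dist x y := ‖d x y‖
  dist_self x := norm_eq_zero.2 ((hd.eq_zero_iff x x).2 rfl)
  dist_comm x y := congrArg norm (hd.symm x y)
  dist_triangle x y z :=
    (CStarAlgebra.norm_le_norm_of_nonneg_of_le (hd.nonneg x z) (hd.triangle x z y)).trans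
      (norm_add_le _ _)
  eq_of_dist_eq_zero {x y} h := (hd.eq_zero_iff x y).1 (norm_eq_zero.1 h)

theorem completeSpace (hd : IsValuedMetric d)
    (complete : ∀ u : ℕ → X,
      Tendsto (fun m : ℕ × ℕ => ‖d (u m.1) (u m.2)‖) atTop (𝓝 0) →
      ∃ x, Tendsto (fun n => ‖d (u n) x‖) atTop (𝓝 0)) :
    letI := hd.toMetricSpace
    CompleteSpace X := by
  let := hd.toMetricSpace
  refine Metric.complete_of_cauchySeq_tendsto fun u hu => ?_
  obtain ⟨x, hx⟩ := complete u (cauchySeq_iff_tendsto_dist_atTop_0.1 hu)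
  exact ⟨x, tendsto_iff_dist_tendsto_zero.2 hx⟩

end IsValuedMetric

theorem norm_le_of_le_mul_add_mul {A : Type*} [NonUnitalCStarAlgebra A] [PartialOrder A]
    [StarOrderedRing A] {a b c p q : A} (hc : 0 ≤ c) (h : c ≤ a * p + b * q) :
    ‖c‖ ≤ ‖a‖ * ‖p‖ + ‖b‖ * ‖q‖ :=
  calc ‖c‖ ≤ ‖a * p + b * q‖ := CStarAlgebra.norm_le_norm_of_nonneg_of_le hc h
    _ ≤ ‖a * p‖ + ‖b * q‖ := norm_add_le _ _
    _ ≤ ‖a‖ * ‖p‖ + ‖b‖ * ‖q‖ := add_le_add (norm_mul_le _ _) (norm_mul_le _ _)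

theorem coupled_fixed_point_chatterjea_general {X : Type*} [Nonempty X] {A : Type*}
    [NonUnitalCStarAlgebra A] [PartialOrder A] [StarOrderedRing A] {d : X → X → A}
    (hd : IsValuedMetric d)
    (complete : ∀ u : ℕ → X,
      Tendsto (fun m : ℕ × ℕ => ‖d (u m.1) (u m.2)‖) atTop (𝓝 0) →
      ∃ x, Tendsto (fun n => ‖d (u n) x‖) atTop (𝓝 0))
    {F : X → X → X} {a b : A} (hab : ‖a‖ + ‖b‖ < 1)
    (hF : ∀ x y u v, d (F x y) (F u v) ≤ a * d (F x y) u + b * d (F u v) x) :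
    (∃! p : X × X, F p.1 p.2 = p.1 ∧ F p.2 p.1 = p.2) ∧
    (∀ p : X × X, (F p.1 p.2 = p.1 ∧ F p.2 p.1 = p.2) → p.1 = p.2) ∧
    (∃! x : X, F x x = x) := by
  let := hd.toMetricSpace
  have := hd.completeSpace complete
  have hF_dist (x y u v : X) :
      dist (F x y) (F u v) ≤ ‖a‖ * dist (F x y) u + ‖b‖ * dist (F u v) x :=
    norm_le_of_le_mul_add_mul (hd.nonneg _ _) (hF x y u v)
  have unique {x y u v : X} (hx : F x y = x) (hu : F u v = u) : x = u :=
    eq_of_apply_eq_left hab hF_dist hx hu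
  obtain ⟨x, hx⟩ := exists_diagonal_fixedPoint (by positivity) hab hF_dist
  exact ⟨⟨(x, x), ⟨hx, hx⟩, fun _ hp => Prod.ext (unique hp.1 hx) (unique hp.2 hx)⟩,
    fun _ hp => unique hp.1 hp.2, x, hx, fun _ hy => unique hy hx⟩

/-- **Theorem 2.6 (Statement 9).** Let `(X, A, d)` be a complete C*-algebra-valued metric
space and `F : X × X → X` satisfy
`d (F x y) (F u v) ⪯ a ⬝ d (F x y) u + b ⬝ d (F u v) x` where `a, b` are positive central
elements with `‖a‖ + ‖b‖ < 1`.  Then `F` has a unique coupled fixed point `(x, y)`; moreover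
`x = y`, so `F` has a unique fixed point. -/
theorem coupled_fixed_point_chatterjea
    {X : Type*} [Nonempty X] {A : Type*} [CStarAlgebra A]
    [PartialOrder A] [StarOrderedRing A]
    (d : X → X → A)
    (d_nonneg : ∀ x y, 0 ≤ d x y)
    (d_eq_zero : ∀ x y, d x y = 0 ↔ x = y)
    (d_symm : ∀ x y, d x y = d y x)
    (d_triangle : ∀ x y z, d x y ≤ d x z + d z y)
    (complete : ∀ u : ℕ → X,
      (∀ p : ℕ, Filter.Tendsto (fun n => ‖d (u (n + p)) (u n)‖) Filter.atTop (nhds 0)) →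
      ∃ x : X, Filter.Tendsto (fun n => ‖d (u n) x‖) Filter.atTop (nhds 0))
    (F : X → X → X) (a b : A)
    (ha_pos : 0 ≤ a) (ha_comm : ∀ c : A, a * c = c * a)
    (hb_pos : 0 ≤ b) (hb_comm : ∀ c : A, b * c = c * b)
    (hab : ‖a‖ + ‖b‖ < 1)
    (hF : ∀ x y u v : X, d (F x y) (F u v) ≤ a * d (F x y) u + b * d (F u v) x) :
    (∃! p : X × X, F p.1 p.2 = p.1 ∧ F p.2 p.1 = p.2) ∧
    (∀ p : X × X, (F p.1 p.2 = p.1 ∧ F p.2 p.1 = p.2) → p.1 = p.2) ∧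
    (∃! x : X, F x x = x) :=
  coupled_fixed_point_chatterjea_general ⟨d_nonneg, d_eq_zero, d_symm, d_triangle⟩
    (fun u hu => complete u fun p =>
      hu.comp ((tendsto_add_atTop_nat p).prodMk tendsto_id |>.mono_right prod_atTop_atTop_eq.le))
    hab hF
end

section
/- Let (X, A, d) be a C*-algebra-valued metric space and let F : X × X → X satisfy d(F(x,y), F(u,v)) ⪯ a · d(F(x,y), u) + b · d(F(u,v), x) for all x, y, u, v ∈ X, where a and b are positive elements of A commuting with every element of A and ‖a‖ + ‖b‖ < 1. Given arbitrary x₀, y₀ ∈ X, define x_{n+1} = F(xₙ, yₙ) and y_{n+1} = F(yₙ, xₙ). Then for every n ≥ 1, d(xₙ, x_{n+1}) ⪯ (1 − (a+b)/2)⁻¹ · ((a+b)/2) · d(xₙ, x_{n−1}), and the sequences (xₙ) and (yₙ) are Cauchy sequences in X. -/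
/-!
Applying the contraction condition to the consecutive steps `(xₙ₊₁, xₙ)` and `(xₙ, xₙ₊₁)` kills one
of its two terms each time, because `d (x k) (x k) = 0`. Averaging the two resulting bounds gives
`d xₙ₊₂ xₙ₊₁ ⪯ c * d xₙ₊₂ xₙ` with `c = (a + b) / 2`. For positive central `c` the triangle
inequality may be inserted on the right, and multiplication by the positive central element
`(1 - c)⁻¹` solves for `d xₙ₊₂ xₙ₊₁`. For the Cauchy property it suffices to take norms:
`‖d · ·‖` is a real pseudometric, and `‖c‖ < 1 / 2` makes its consecutive distances decay
geometrically with ratio `‖c‖ / (1 - ‖c‖) < 1`.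
-/

open Filter Topology

theorem norm_inv_two_smul {E : Type*} [SeminormedAddCommGroup E] [NormedSpace ℝ E] (v : E) :
    ‖(2⁻¹ : ℝ) • v‖ = ‖v‖ / 2 := by
  rw [norm_smul, norm_inv, Real.norm_two, inv_mul_eq_div]

section PseudoMetricSpace

variable {X : Type*} [PseudoMetricSpace X]

theorem cauchySeq_of_dist_succ_le_mul_dist_add_two {x : ℕ → X} {k : ℝ} (hk₀ : 0 ≤ k)
    (hk : k < 1 / 2) (h : ∀ n, dist (x (n + 2)) (x (n + 1)) ≤ k * dist (x (n + 2)) (x n)) :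
    CauchySeq x := by
  have hpos : 0 < 1 - k := by linarith
  have hratio : k / (1 - k) < 1 := by rw [div_lt_one hpos]; linarith
  have hstep (n : ℕ) :
      dist (x (n + 1)) (x (n + 2)) ≤ k / (1 - k) * dist (x n) (x (n + 1)) := by
    have htriangle : dist (x (n + 2)) (x (n + 1)) ≤
        k * (dist (x (n + 2)) (x (n + 1)) + dist (x (n + 1)) (x n)) :=
      (h n).trans (by gcongr; exact dist_triangle _ _ _)
    rw [div_mul_eq_mul_div, le_div_iff₀ hpos, dist_comm (x (n + 1)), dist_comm (x n)]
    linarith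
  refine cauchySeq_of_le_geometric _ (dist (x 0) (x 1)) hratio fun n => ?_
  rw [mul_comm]
  exact le_geom (u := fun n => dist (x n) (x (n + 1))) (by positivity) n fun m _ => hstep m

end PseudoMetricSpace

section CentralElement

theorem mul_le_mul_of_nonneg_left_of_commute {A : Type*} [NonUnitalCStarAlgebra A]
    [PartialOrder A] [StarOrderedRing A] {c u v : A} (hc : 0 ≤ c) (hcomm : ∀ z, Commute c z)
    (huv : u ≤ v) : c * u ≤ c * v := by
  rw [← sub_nonneg, ← mul_sub]
  exact (hcomm _).mul_nonneg hc (sub_nonneg.2 huv)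

variable {A : Type*} [CStarAlgebra A] [PartialOrder A] [StarOrderedRing A]

theorem le_ringInverse_one_sub_mul_of_le_mul_add {c u v : A} (hc : 0 ≤ c)
    (hcomm : ∀ z, Commute c z) (hnorm : ‖c‖ < 1) (h : u ≤ c * (u + v)) :
    u ≤ Ring.inverse (1 - c) * c * v := by
  obtain ⟨w, hw⟩ : IsUnit (1 - c) := isUnit_one_sub_of_norm_lt_one hnorm
  have inv_nonneg : (0 : A) ≤ ↑w⁻¹ := by
    refine CFC.inv_nonneg_of_nonneg w ?_
    rw [hw, sub_nonneg]
    exact (CStarAlgebra.norm_le_one_iff_of_nonneg c hc).1 hnorm.le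
  have inv_comm (z : A) : Commute (↑w⁻¹ : A) z :=
    Commute.units_inv_left (hw ▸ (Commute.one_left z).sub_left (hcomm z))
  have mul_le : (w : A) * u ≤ c * v := by
    rwa [hw, sub_mul, one_mul, sub_le_iff_le_add', ← mul_add]
  calc u = ↑w⁻¹ * (w * u) := (w.inv_mul_cancel_left u).symm
    _ ≤ ↑w⁻¹ * (c * v) := mul_le_mul_of_nonneg_left_of_commute inv_nonneg inv_comm mul_le
    _ = Ring.inverse (1 - c) * c * v := by rw [← hw, Ring.inverse_unit, mul_assoc]

end CentralElement

/-- A pseudometric on `X` with values in the positive cone of an ordered additive structure `A`.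
For a C⋆-algebra `A` this is a C⋆-algebra-valued metric in which distinct points may have
distance zero. -/
structure IsConePseudometric {X A : Type*} [Zero A] [Add A] [LE A] (d : X → X → A) : Prop where
  nonneg : ∀ x y, 0 ≤ d x y
  self_eq_zero : ∀ x, d x x = 0
  symm : ∀ x y, d x y = d y x
  triangle : ∀ x y z, d x y ≤ d x z + d z y

/-- A sequence satisfying the Chatterjea contraction condition with coefficients `a` and `b` along
itself. If `F` satisfies that condition, then every sequence with `x (n + 1) = F (x n) (y n)` is of
this kind, whatever the sequence `y` is. -/
def IsChatterjeaSeq {X A : Type*} [Mul A] [Add A] [LE A] (d : X → X → A) (a b : A)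
    (x : ℕ → X) : Prop :=
  ∀ m n, d (x (m + 1)) (x (n + 1)) ≤ a * d (x (m + 1)) (x n) + b * d (x (n + 1)) (x m)

section NonUnitalCStarAlgebra

variable {X A : Type*} [NonUnitalCStarAlgebra A] [PartialOrder A] [StarOrderedRing A]
  {d : X → X → A} {a b : A} {x : ℕ → X}

/-- The real pseudometric `‖d x y‖` attached to a C⋆-algebra-valued pseudometric `d`. It gives
access to the theory of Cauchy sequences in pseudometric spaces. -/
abbrev IsConePseudometric.normPseudoMetricSpace (hd : IsConePseudometric d) :
    PseudoMetricSpace X where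
  dist x y := ‖d x y‖
  dist_self x := by rw [hd.self_eq_zero, norm_zero]
  dist_comm x y := by rw [hd.symm]
  dist_triangle x y z :=
    (CStarAlgebra.norm_le_norm_of_nonneg_of_le (hd.nonneg x z) (hd.triangle x z y)).trans
      (norm_add_le _ _)

theorem IsChatterjeaSeq.dist_succ_le_mul (hd : IsConePseudometric d) (hx : IsChatterjeaSeq d a b x)
    (n : ℕ) :
    d (x (n + 2)) (x (n + 1)) ≤ ((2⁻¹ : ℝ) • (a + b)) * d (x (n + 2)) (x n) := by
  have hleft : d (x (n + 2)) (x (n + 1)) ≤ a * d (x (n + 2)) (x n) := by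
    simpa only [hd.self_eq_zero, mul_zero, add_zero] using hx (n + 1) n
  have hright : d (x (n + 2)) (x (n + 1)) ≤ b * d (x (n + 2)) (x n) := by
    simpa only [hd.self_eq_zero, mul_zero, zero_add, hd.symm (x (n + 1)) (x (n + 1 + 1))]
      using hx n (n + 1)
  calc d (x (n + 2)) (x (n + 1))
      = (2⁻¹ : ℝ) • (d (x (n + 2)) (x (n + 1)) + d (x (n + 2)) (x (n + 1))) := by
        rw [← two_smul ℝ, inv_smul_smul₀ two_ne_zero]
    _ ≤ (2⁻¹ : ℝ) • (a * d (x (n + 2)) (x n) + b * d (x (n + 2)) (x n)) := by gcongr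
    _ = ((2⁻¹ : ℝ) • (a + b)) * d (x (n + 2)) (x n) := by rw [smul_mul_assoc, add_mul]

theorem IsChatterjeaSeq.tendsto_norm_dist (hd : IsConePseudometric d)
    (hx : IsChatterjeaSeq d a b x) (hab : ‖a + b‖ < 1) :
    Tendsto (fun n : ℕ × ℕ => ‖d (x n.1) (x n.2)‖) atTop (𝓝 0) := by
  let := hd.normPseudoMetricSpace
  have hcauchy : CauchySeq x := by
    have hc_norm : ‖(2⁻¹ : ℝ) • (a + b)‖ < 1 / 2 := by rw [norm_inv_two_smul]; linarith
    refine cauchySeq_of_dist_succ_le_mul_dist_add_two (norm_nonneg _) hc_norm fun n => ?_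
    exact (CStarAlgebra.norm_le_norm_of_nonneg_of_le (hd.nonneg _ _)
      (hx.dist_succ_le_mul hd n)).trans (norm_mul_le _ _)
  exact cauchySeq_iff_tendsto_dist_atTop_0.1 hcauchy

end NonUnitalCStarAlgebra

section CStarAlgebra

variable {X A : Type*} [CStarAlgebra A] [PartialOrder A] [StarOrderedRing A]
  {d : X → X → A} {a b : A} {x : ℕ → X}

theorem IsChatterjeaSeq.dist_succ_le_ringInverse_mul (hd : IsConePseudometric d)
    (hx : IsChatterjeaSeq d a b x) (hab_nonneg : 0 ≤ a + b) (hab_comm : ∀ c, Commute (a + b) c)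
    (hab : ‖a + b‖ < 2) (n : ℕ) :
    d (x (n + 1)) (x (n + 2)) ≤
      Ring.inverse (1 - (2⁻¹ : ℝ) • (a + b)) * ((2⁻¹ : ℝ) • (a + b)) * d (x (n + 1)) (x n) := by
  have hc_nonneg : 0 ≤ (2⁻¹ : ℝ) • (a + b) := smul_nonneg (by norm_num) hab_nonneg
  have hc_comm (z : A) : Commute ((2⁻¹ : ℝ) • (a + b)) z := (hab_comm z).smul_left _
  have hc_norm : ‖(2⁻¹ : ℝ) • (a + b)‖ < 1 := by rw [norm_inv_two_smul]; linarith
  rw [hd.symm (x (n + 1)) (x (n + 2))]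
  refine le_ringInverse_one_sub_mul_of_le_mul_add hc_nonneg hc_comm hc_norm ?_
  exact (hx.dist_succ_le_mul hd n).trans
    (mul_le_mul_of_nonneg_left_of_commute hc_nonneg hc_comm (hd.triangle _ _ _))

theorem chatterjea_iteration_cauchy_general (hd : IsConePseudometric d)
    (hx : IsChatterjeaSeq d a b x) (hab_nonneg : 0 ≤ a + b) (hab_comm : ∀ c, Commute (a + b) c)
    (hab : ‖a + b‖ < 1) :
    (∀ n, d (x (n + 1)) (x (n + 2)) ≤
      Ring.inverse (1 - (2⁻¹ : ℝ) • (a + b)) * ((2⁻¹ : ℝ) • (a + b)) * d (x (n + 1)) (x n)) ∧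
    Tendsto (fun n : ℕ × ℕ => ‖d (x n.1) (x n.2)‖) atTop (𝓝 0) :=
  ⟨hx.dist_succ_le_ringInverse_mul hd hab_nonneg hab_comm (hab.trans one_lt_two),
    hx.tendsto_norm_dist hd hab⟩

end CStarAlgebra

/-- In a C*-algebra-valued metric space, if
`d (F x y) (F u v) ⪯ a ⬝ d (F x y) u + b ⬝ d (F u v) x` with `a, b` positive central elements
and `‖a‖ + ‖b‖ < 1`, then the iteration sequences `x_{n+1} = F xₙ yₙ`, `y_{n+1} = F yₙ xₙ`
satisfy `d xₙ x_{n+1} ⪯ (1 - (a+b)/2)⁻¹ ⬝ ((a+b)/2) ⬝ d xₙ x_{n-1}` for `n ≥ 1`, and both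
sequences are Cauchy. -/
theorem chatterjea_iteration_cauchy
    {X : Type*} {A : Type*} [CStarAlgebra A]
    [PartialOrder A] [StarOrderedRing A]
    (d : X → X → A)
    (d_nonneg : ∀ x y, 0 ≤ d x y)
    (d_eq_zero : ∀ x y, d x y = 0 ↔ x = y)
    (d_symm : ∀ x y, d x y = d y x)
    (d_triangle : ∀ x y z, d x y ≤ d x z + d z y)
    (F : X → X → X) (a b : A)
    (ha_pos : 0 ≤ a) (ha_comm : ∀ c : A, a * c = c * a)
    (hb_pos : 0 ≤ b) (hb_comm : ∀ c : A, b * c = c * b)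
    (hab : ‖a‖ + ‖b‖ < 1)
    (hF : ∀ x y u v : X, d (F x y) (F u v) ≤ a * d (F x y) u + b * d (F u v) x)
    (x y : ℕ → X)
    (hx : ∀ n, x (n + 1) = F (x n) (y n))
    (hy : ∀ n, y (n + 1) = F (y n) (x n)) :
    (∀ n : ℕ, 1 ≤ n → d (x n) (x (n + 1)) ≤
      Ring.inverse (1 - (2⁻¹ : ℝ) • (a + b)) * ((2⁻¹ : ℝ) • (a + b)) * d (x n) (x (n - 1))) ∧
    (∀ p : ℕ, Filter.Tendsto (fun n => ‖d (x (n + p)) (x n)‖) Filter.atTop (nhds 0)) ∧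
    (∀ p : ℕ, Filter.Tendsto (fun n => ‖d (y (n + p)) (y n)‖) Filter.atTop (nhds 0)) := by
  have hd : IsConePseudometric d := ⟨d_nonneg, fun z => (d_eq_zero z z).2 rfl, d_symm, d_triangle⟩
  have general {z : ℕ → X} (hz : IsChatterjeaSeq d a b z) :=
    chatterjea_iteration_cauchy_general hd hz (add_nonneg ha_pos hb_pos)
      (fun c => Commute.add_left (ha_comm c) (hb_comm c)) ((norm_add_le a b).trans_lt hab)
  have shift (p : ℕ) : Tendsto (fun n => (n + p, n)) atTop atTop := by
    rw [← prod_atTop_atTop_eq]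
    exact (tendsto_add_atTop_nat p).prodMk tendsto_id
  have hxc : IsChatterjeaSeq d a b x := fun m n => by simpa only [hx] using hF _ _ _ _
  have hyc : IsChatterjeaSeq d a b y := fun m n => by simpa only [hy] using hF _ _ _ _
  obtain ⟨hx_le, hx_cauchy⟩ := general hxc
  exact ⟨fun | n + 1, _ => hx_le n, fun p => hx_cauchy.comp (shift p),
    fun p => (general hyc).2.comp (shift p)⟩
end
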